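/- (Caputo case, ψ(t) = t) Suppose q ∈ L¹(a,b), κ ∈ (0,1), and |𝒢(x)| ≤ κ·‖x‖ for all x ∈ C([a,b],ℝ). If there exists a nontrivial continuous function x: [a,b] → ℝ satisfying x(t) = ((t−a)/(b−a))^β·𝒢(x) + ∫_a^b G(τ,t)·q(τ)·x(τ) dτ for all t ∈ [a,b], then ∫_a^b |q(τ)| dτ ≥ (1−κ)·Γ(α+β)/(b−a)^{α+β−1}. -/

import Mathlib

open MeasureTheory Set

/-- The Green function in the Caputo case `ψ(t) = t`. -/
noncomputable def G (a b α β : ℝ) (τ t : ℝ) : ℝ :=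
  if τ ≤ t then
    (t - a) ^ β * (b - τ) ^ (α + β - 1) /
        (Real.Gamma (α + β) * (b - a) ^ β) -
      (t - τ) ^ (α + β - 1) / Real.Gamma (α + β)
  else
    (t - a) ^ β * (b - τ) ^ (α + β - 1) /
      (Real.Gamma (α + β) * (b - a) ^ β)

/-- The supremum norm of a function over the interval `[a,b]`. -/
noncomputable def supNorm (a b : ℝ) (x : ℝ → ℝ) : ℝ :=
  ⨆ t : Set.Icc a b, |x ↑t|

lemma G_bound (a b α β : ℝ) (hab : a < b) (hβ0 : 0 < β) (hαβ : 1 < α + β)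
    (τ t : ℝ) (hτ : τ ∈ Set.Icc a b) (ht : t ∈ Set.Icc a b) :
    |G a b α β τ t| ≤ (b - a) ^ (α + β - 1) / Real.Gamma (α + β) := by
  obtain ⟨h1, h2⟩ := hτ
  obtain ⟨h3, h4⟩ := ht
  have hΓ : 0 < Real.Gamma (α + β) := Real.Gamma_pos_of_pos (by linarith)
  have hg : 0 ≤ α + β - 1 := by linarith
  have hp : 0 < (b - a) ^ β := Real.rpow_pos_of_pos (by linarith) _
  have e1 : (t - a) ^ β ≤ (b - a) ^ β :=
    Real.rpow_le_rpow (by linarith) (by linarith) hβ0.le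
  have e2 : (b - τ) ^ (α + β - 1) ≤ (b - a) ^ (α + β - 1) :=
    Real.rpow_le_rpow (by linarith) (by linarith) hg
  have n1 : 0 ≤ (t - a) ^ β := Real.rpow_nonneg (by linarith) _
  have n2 : 0 ≤ (b - τ) ^ (α + β - 1) := Real.rpow_nonneg (by linarith) _
  have A0 : 0 ≤ (t - a) ^ β * (b - τ) ^ (α + β - 1) /
        (Real.Gamma (α + β) * (b - a) ^ β) := by positivity
  have A1 : (t - a) ^ β * (b - τ) ^ (α + β - 1) /
        (Real.Gamma (α + β) * (b - a) ^ β) ≤ (b - a) ^ (α + β - 1) / Real.Gamma (α + β) := by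
    rw [div_le_div_iff₀ (by positivity) hΓ]
    have := mul_le_mul e1 e2 n2 hp.le
    calc _ ≤ ((b - a) ^ β * (b - a) ^ (α + β - 1)) * Real.Gamma (α + β) :=
          mul_le_mul_of_nonneg_right this hΓ.le
      _ = _ := by ring
  unfold G
  split_ifs with h
  · have B0 : 0 ≤ (t - τ) ^ (α + β - 1) / Real.Gamma (α + β) :=
      div_nonneg (Real.rpow_nonneg (by linarith) _) hΓ.le
    have B1 : (t - τ) ^ (α + β - 1) / Real.Gamma (α + β) ≤
        (b - a) ^ (α + β - 1) / Real.Gamma (α + β) :=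
      div_le_div_of_nonneg_right
        (Real.rpow_le_rpow (by linarith) (by linarith) hg) hΓ.le
    rw [abs_le]
    constructor <;> linarith
  · rw [abs_of_nonneg A0]
    exact A1

theorem lyapunov_caputo
    (a b α β κ : ℝ) (hab : a < b)
    (hα0 : 0 < α) (hα1 : α ≤ 1) (hβ0 : 0 < β) (hβ1 : β ≤ 1) (hαβ : 1 < α + β)
    (q : ℝ → ℝ) (𝒢 : (ℝ → ℝ) → ℝ)
    (hq : IntervalIntegrable q volume a b)
    (hκ0 : 0 < κ) (hκ1 : κ < 1)
    (h𝒢 : ∀ x : ℝ → ℝ, ContinuousOn x (Set.Icc a b) → |𝒢 x| ≤ κ * supNorm a b x)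
    (x : ℝ → ℝ) (hx_cont : ContinuousOn x (Set.Icc a b))
    (hx_nontrivial : ∃ t ∈ Set.Icc a b, x t ≠ 0)
    (hmild : ∀ t ∈ Set.Icc a b,
      x t = ((t - a) / (b - a)) ^ β * 𝒢 x +
        ∫ τ in a..b, G a b α β τ t * q τ * x τ) :
    ∫ τ in a..b, |q τ| ≥ (1 - κ) * Real.Gamma (α + β) / (b - a) ^ (α + β - 1) := by
  obtain ⟨t₀, ht₀, hmax⟩ := isCompact_Icc.exists_isMaxOn (nonempty_Icc.2 hab.le) hx_cont.abs
  have hN : ∀ t ∈ Set.Icc a b, |x t| ≤ |x t₀| := fun t ht => hmax ht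
  have hpos : 0 < |x t₀| := by
    obtain ⟨t, ht, hne⟩ := hx_nontrivial
    exact (abs_pos.2 hne).trans_le (hN t ht)
  have hsup : supNorm a b x ≤ |x t₀| := by
    have : Nonempty (Set.Icc a b) := ⟨⟨t₀, ht₀⟩⟩
    exact ciSup_le fun t => hN t t.2
  have hΓ : 0 < Real.Gamma (α + β) := Real.Gamma_pos_of_pos (by linarith)
  have hM : 0 < (b - a) ^ (α + β - 1) := Real.rpow_pos_of_pos (by linarith) _
  have hI : ‖∫ τ in a..b, G a b α β τ t₀ * q τ * x τ‖ ≤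
      ∫ τ in a..b, ((b - a) ^ (α + β - 1) / Real.Gamma (α + β) * |x t₀|) * |q τ| := by
    apply intervalIntegral.norm_integral_le_of_norm_le hab.le
    · refine Filter.Eventually.of_forall fun τ hτ => ?_
      have hτ' : τ ∈ Set.Icc a b := Ioc_subset_Icc_self hτ
      rw [Real.norm_eq_abs, abs_mul, abs_mul]
      have h1 := G_bound a b α β hab hβ0 hαβ τ t₀ hτ' ht₀
      calc _ ≤ ((b - a) ^ (α + β - 1) / Real.Gamma (α + β) * |q τ|) * |x t₀| :=
            mul_le_mul (mul_le_mul_of_nonneg_right h1 (abs_nonneg _)) (hN τ hτ')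
              (abs_nonneg _) (by positivity)
        _ = _ := by ring
    · exact hq.abs.const_mul _
  rw [intervalIntegral.integral_const_mul, Real.norm_eq_abs] at hI
  have hc0 : 0 ≤ (t₀ - a) / (b - a) := div_nonneg (by linarith [ht₀.1]) (by linarith)
  have hc1 : ((t₀ - a) / (b - a)) ^ β ≤ 1 :=
    Real.rpow_le_one hc0 ((div_le_one (by linarith)).2 (by linarith [ht₀.2])) hβ0.le
  have hG : |((t₀ - a) / (b - a)) ^ β * 𝒢 x| ≤ κ * |x t₀| := by
    rw [abs_mul, abs_of_nonneg (Real.rpow_nonneg hc0 _)]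
    calc _ ≤ 1 * |𝒢 x| := by gcongr
      _ ≤ κ * supNorm a b x := by rw [one_mul]; exact h𝒢 x hx_cont
      _ ≤ _ := by gcongr
  have hfin : |x t₀| ≤ κ * |x t₀| +
      (b - a) ^ (α + β - 1) / Real.Gamma (α + β) * |x t₀| * ∫ τ in a..b, |q τ| := by
    have h := abs_add_le (((t₀ - a) / (b - a)) ^ β * 𝒢 x)
      (∫ τ in a..b, G a b α β τ t₀ * q τ * x τ)
    rw [← hmild t₀ ht₀] at h
    linarith
  have h2 : 1 - κ ≤ (b - a) ^ (α + β - 1) / Real.Gamma (α + β) * ∫ τ in a..b, |q τ| := by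
    refine le_of_mul_le_mul_right ?_ hpos
    linarith
  rw [ge_iff_le, div_le_iff₀ hM]
  rw [div_mul_eq_mul_div, le_div_iff₀ hΓ] at h2
  linarith
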